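/- Let S = {S_1,…,S_K} ⊂ ℂ^{d×d} satisfy the periodically switched stability condition: ρ(S_{i_1}⋯S_{i_n}) < 1 for every n ≥ 1 and every word (i_1,…,i_n) ∈ {1,…,K}^n. Let P = (p_{ij}) ∈ ℝ^{K×K} be an irreducible stochastic matrix with stationary distribution p having all entries positive, and let μ_{p,P} be the associated canonical (p,P)-Markov measure on Σ_K^+. If μ_{p,P} is extremal for S, then ρ(S) < 1. -/

import Mathlib

open Filter MeasureTheory Topology
open scoped ENNReal

noncomputable section

/-- The one-sided shift on `Σ_K^+ = ℕ → Fin K`. -/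
def shift (K : ℕ) : (ℕ → Fin K) → ℕ → Fin K := fun i n => i (n + 1)

/-- The ordered product `S_{w 0} ⋯ S_{w (n-1)}` along a finite word `w`. -/
def finWordProd {d K : ℕ} (S : Fin K → Matrix (Fin d) (Fin d) ℂ) {n : ℕ}
    (w : Fin n → Fin K) : Matrix (Fin d) (Fin d) ℂ :=
  (List.ofFn fun t => S (w t)).prod

/-- The ordered product of the first `n` matrices along an infinite sequence. -/
def wordProd {d K : ℕ} (S : Fin K → Matrix (Fin d) (Fin d) ℂ)
    (i : ℕ → Fin K) (n : ℕ) : Matrix (Fin d) (Fin d) ℂ :=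
  (List.ofFn fun t : Fin n => S (i t)).prod

/-- The (usual) spectral radius of a complex matrix, as a real number. -/
def specRad {d : ℕ} (A : Matrix (Fin d) (Fin d) ℂ) : ℝ :=
  (spectralRadius ℂ A).toReal

/-- The generalized spectral radius of a finite family of matrices. -/
def genSpecRad {d K : ℕ} (S : Fin K → Matrix (Fin d) (Fin d) ℂ) : ℝ :=
  Filter.atTop.limsup fun n : ℕ =>
    ⨆ w : Fin n → Fin K, specRad (finWordProd S w) ^ ((n : ℝ)⁻¹)

/-- A submultiplicative matrix norm on `d × d` complex matrices. -/
structure MatrixNorm (d : ℕ) where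
  N : Matrix (Fin d) (Fin d) ℂ → ℝ
  nonneg : ∀ A, 0 ≤ N A
  definite : ∀ A, N A = 0 ↔ A = 0
  homog : ∀ (c : ℂ) (A), N (c • A) = ‖c‖ * N A
  triangle : ∀ A B, N (A + B) ≤ N A + N B
  submult : ∀ A B, N (A * B) ≤ N A * N B

/-- `μ` is extremal for `S` (w.r.t. the matrix norm `N`). -/
def IsExtremal {d K : ℕ} (S : Fin K → Matrix (Fin d) (Fin d) ℂ)
    (N : Matrix (Fin d) (Fin d) ℂ → ℝ) (μ : Measure (ℕ → Fin K)) : Prop :=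
  ∀ᵐ i ∂μ, Tendsto (fun n : ℕ => N (wordProd S i n) ^ ((n : ℝ)⁻¹))
    atTop (𝓝 (genSpecRad S))

/-- `x` is a density point of `μ`. -/
def DensityPoint {K : ℕ} (μ : Measure (ℕ → Fin K)) (x : ℕ → Fin K) : Prop :=
  ∀ U : Set (ℕ → Fin K), IsOpen U → x ∈ U → 0 < μ U

/-- `S` has the spectral finiteness property. -/
def HasFinitenessProperty {d K : ℕ} (S : Fin K → Matrix (Fin d) (Fin d) ℂ) : Prop :=
  ∃ n : ℕ, 1 ≤ n ∧ ∃ w : Fin n → Fin K,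
    genSpecRad S = specRad (finWordProd S w) ^ ((n : ℝ)⁻¹)

/-- `x` is periodic of period `π ≥ 1`. -/
def IsPeriodic {K : ℕ} (x : ℕ → Fin K) (π : ℕ) : Prop :=
  1 ≤ π ∧ ∀ n, x (n + π) = x n

/-- The cylinder set determined by a finite word. -/
def cyl {K : ℕ} {n : ℕ} (w : Fin n → Fin K) : Set (ℕ → Fin K) :=
  {i | ∀ t : Fin n, i t = w t}

open scoped NNReal
open Module (End)

section MarkovSwitching

variable {ι V : Type*} [AddCommGroup V] [Module ℂ V]

/-- The composition of the maps `T b` along a word, the first letter acting first. -/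
def wordOp (T : ι → End ℂ V) : List ι → End ℂ V
  | [] => 1
  | b :: l => wordOp T l * T b

theorem wordOp_append (T : ι → End ℂ V) (l l' : List ι) :
    wordOp T (l ++ l') = wordOp T l' * wordOp T l := by
  induction l with
  | nil => simp [wordOp]
  | cons b l ih => simp [wordOp, ih, mul_assoc]

theorem wordOp_flatten_replicate (T : ι → End ℂ V) (l : List ι) (m : ℕ) :
    wordOp T (List.replicate m l).flatten = wordOp T l ^ m := by
  induction m with
  | zero => simp [wordOp]
  | succ m ih => simp [List.replicate_succ, wordOp_append, ih, pow_succ]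

/-- Every nonempty product of the maps `T b` has all its eigenvalues in the open unit disc. -/
def PeriodicallyStable (T : ι → End ℂ V) : Prop :=
  ∀ l : List ι, l ≠ [] → ∀ z : ℂ, (wordOp T l).HasEigenvalue z → ‖z‖ < 1

/-- **Burnside's theorem** on irreducible matrix algebras over `ℂ`. -/
theorem adjoin_eq_top_of_irreducible [FiniteDimensional ℂ V] [Nontrivial V] (s : Set (End ℂ V))
    (h : ∀ W : Submodule ℂ V, (∀ f ∈ s, ∀ w ∈ W, f w ∈ W) → W = ⊥ ∨ W = ⊤) :
    Algebra.adjoin ℂ s = ⊤ := by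
  let A := Algebra.adjoin ℂ s
  have : IsSimpleModule A V := by
    refine { exists_pair_ne := ⟨⊥, ⊤, bot_ne_top⟩, eq_bot_or_eq_top := fun W => ?_ }
    have := h (W.restrictScalars ℂ) fun f hf w hw =>
      W.smul_mem (⟨f, Algebra.subset_adjoin hf⟩ : A) hw
    simpa using this
  have hS := (IsSimpleModule.algebraMap_end_bijective_of_isAlgClosed (A := A) (V := V) ℂ).2
  rw [eq_top_iff]
  rintro f -
  let f' : End (End A V) V :=
    { toFun := f
      map_add' := f.map_add
      map_smul' := fun g v => by
        obtain ⟨c, rfl⟩ := hS g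
        simp }
  let b := Module.finBasis ℂ V
  classical
  obtain ⟨r, hr⟩ := jacobson_density f' (Finset.univ.image b)
  have : f = r.1 := b.ext fun i => hr (b i) (by simp)
  exact this ▸ r.2

theorem norm_trace_le [FiniteDimensional ℂ V] (f : End ℂ V)
    (h : ∀ z : ℂ, f.HasEigenvalue z → ‖z‖ ≤ 1) :
    ‖LinearMap.trace ℂ V f‖ ≤ Module.finrank ℂ V := by
  rw [Module.End.trace_eq_sum_roots_charpoly_of_splits (IsAlgClosed.splits _),
    ← f.charpoly_natDegree, (IsAlgClosed.splits f.charpoly).natDegree_eq_card_roots]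
  have key : ∀ m : Multiset ℂ, (∀ z ∈ m, ‖z‖ ≤ 1) → ‖m.sum‖ ≤ m.card := by
    intro m
    induction m using Multiset.induction_on with
    | empty => simp
    | cons a m ih =>
      intro hm
      have h1 := ih fun z hz => hm z (Multiset.mem_cons_of_mem hz)
      have h2 := hm a (Multiset.mem_cons_self a m)
      simp only [Multiset.sum_cons, Multiset.card_cons, Nat.cast_add, Nat.cast_one]
      linarith [norm_add_le a m.sum]
  exact key _ fun z hz =>
    h z ((Module.End.hasEigenvalue_iff_isRoot_charpoly f z).2 (Polynomial.isRoot_of_mem_roots hz))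

theorem exists_eq_wordOp_of_mem_closure (T : ι → End ℂ V) (f : End ℂ V)
    (hf : f ∈ Submonoid.closure (Set.range T)) : ∃ l, f = wordOp T l := by
  induction hf using Submonoid.closure_induction with
  | mem x hx =>
    obtain ⟨b, rfl⟩ := hx
    exact ⟨[b], by simp [wordOp]⟩
  | one => exact ⟨[], rfl⟩
  | mul x y _ _ hx hy =>
    obtain ⟨l, rfl⟩ := hx
    obtain ⟨l', rfl⟩ := hy
    exact ⟨l' ++ l, (wordOp_append T l' l).symm⟩

/-- Products of an irreducible periodically stable family are bounded. -/
theorem PeriodicallyStable.exists_norm_apply_le [FiniteDimensional ℂ V] [Nontrivial V]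
    {T : ι → End ℂ V} (hT : PeriodicallyStable T)
    (h : ∀ W : Submodule ℂ V, (∀ b, ∀ w ∈ W, T b w ∈ W) → W = ⊥ ∨ W = ⊤)
    (φ : V →ₗ[ℂ] ℂ) (v : V) : ∃ C : ℝ, ∀ l, ‖φ (wordOp T l v)‖ ≤ C := by
  have htr : ∀ B : End ℂ V, ∃ C : ℝ, ∀ l, ‖LinearMap.trace ℂ V (wordOp T l * B)‖ ≤ C := by
    intro B
    have hB : B ∈ Submodule.span ℂ (Submonoid.closure (Set.range T) : Set (End ℂ V)) := by
      rw [← Algebra.adjoin_eq_span, adjoin_eq_top_of_irreducible]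
      · trivial
      · exact fun W hW => h W fun b => hW _ ⟨b, rfl⟩
    induction hB using Submodule.span_induction with
    | mem x hx =>
      obtain ⟨l', rfl⟩ := exists_eq_wordOp_of_mem_closure T x hx
      refine ⟨Module.finrank ℂ V, fun l => ?_⟩
      rw [← wordOp_append]
      by_cases hl : l' ++ l = []
      · rw [hl]; simp [wordOp]
      · exact norm_trace_le _ fun z hz => (hT _ hl z hz).le
    | zero => exact ⟨0, by simp⟩
    | add x y _ _ hx hy =>
      obtain ⟨C, hC⟩ := hx
      obtain ⟨D, hD⟩ := hy
      refine ⟨C + D, fun l => ?_⟩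
      rw [mul_add, map_add]
      exact (norm_add_le _ _).trans (add_le_add (hC l) (hD l))
    | smul c x _ hx =>
      obtain ⟨C, hC⟩ := hx
      refine ⟨‖c‖ * C, fun l => ?_⟩
      rw [mul_smul_comm, map_smul, norm_smul]
      exact mul_le_mul_of_nonneg_left (hC l) (norm_nonneg c)
  obtain ⟨C, hC⟩ := htr (φ.smulRight v)
  refine ⟨C, fun l => ?_⟩
  have : wordOp T l * φ.smulRight v = φ.smulRight (wordOp T l v) := by
    ext; simp
  simpa [this, LinearMap.trace_smulRight] using hC l

theorem Seminorm.le_sum_basis {κ : Type*} [Fintype κ] (s : Seminorm ℂ V)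
    (b : Module.Basis κ ℂ V) (v : V) : s v ≤ ∑ i, ‖b.coord i v‖ * s (b i) := by
  conv_lhs => rw [← b.sum_repr v]
  refine (Finset.le_sum_of_subadditive s (map_zero s).le (map_add_le_add s) _ _).trans_eq ?_
  simp [map_smul_eq_mul]

theorem tendsto_pow_zero_of_spectralRadius_lt_one {A : Type*} [NormedRing A] [NormedAlgebra ℂ A]
    [CompleteSpace A] (a : A) (ha : spectralRadius ℂ a < 1) :
    Tendsto (fun m : ℕ => a ^ m) atTop (𝓝 0) := by
  obtain ⟨r, hr, hr1⟩ := ENNReal.lt_iff_exists_nnreal_btwn.1 ha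
  have hr1 : r < 1 := by exact_mod_cast hr1
  have h := (spectrum.pow_nnnorm_pow_one_div_tendsto_nhds_spectralRadius a).eventually
    (gt_mem_nhds hr)
  refine squeeze_zero_norm' ?_ (tendsto_pow_atTop_nhds_zero_of_lt_one r.2 hr1)
  filter_upwards [h, eventually_gt_atTop 0] with m hm hm0
  have hm' : (0 : ℝ) < m := by exact_mod_cast hm0
  have := ENNReal.rpow_le_rpow hm.le hm'.le
  rw [← ENNReal.rpow_mul, one_div_mul_cancel hm'.ne', ENNReal.rpow_one, ENNReal.rpow_natCast]
    at this
  exact_mod_cast this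

section

attribute [local instance] Matrix.linftyOpNormedRing Matrix.linftyOpNormedAlgebra

theorem tendsto_pow_apply_zero [FiniteDimensional ℂ V] [Nontrivial V] (f : End ℂ V)
    (hf : ∀ z : ℂ, f.HasEigenvalue z → ‖z‖ < 1) (φ : V →ₗ[ℂ] ℂ) (v : V) :
    Tendsto (fun m : ℕ => φ ((f ^ m) v)) atTop (𝓝 0) := by
  let e := LinearMap.toMatrixAlgEquiv (Module.finBasis ℂ V)
  have hsp : spectrum ℂ (e f) = spectrum ℂ f := AlgEquiv.spectrum_eq e f
  have hr : spectralRadius ℂ (e f) < (1 : ℝ≥0) := by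
    refine spectrum.spectralRadius_lt_of_forall_lt_of_nonempty ?_ fun z hz => ?_
    · obtain ⟨z, hz⟩ := Module.End.exists_eigenvalue f
      exact ⟨z, hsp ▸ hz.mem_spectrum⟩
    · exact hf z (Module.End.hasEigenvalue_iff_mem_spectrum.2 (hsp ▸ hz))
  have h := tendsto_pow_zero_of_spectralRadius_lt_one (e f) hr
  let L : Matrix (Fin (Module.finrank ℂ V)) (Fin (Module.finrank ℂ V)) ℂ →ₗ[ℂ] ℂ :=
    φ ∘ₗ LinearMap.applyₗ v ∘ₗ e.symm.toLinearMap
  have hL := (L.continuous_of_finiteDimensional.tendsto 0).comp h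
  rw [map_zero] at hL
  refine hL.congr fun m => ?_
  simp [L, ← map_pow]

end

section Words

variable {T : ι → End ℂ V}

/-- An irreducible periodically stable family contracts some dominating seminorm along a high power
of any given word. -/
theorem PeriodicallyStable.exists_seminorm [FiniteDimensional ℂ V] [Nontrivial V]
    (hT : PeriodicallyStable T)
    (h : ∀ W : Submodule ℂ V, (∀ b, ∀ w ∈ W, T b w ∈ W) → W = ⊥ ∨ W = ⊤) (s : Seminorm ℂ V) :
    ∃ q : Seminorm ℂ V, s ≤ q ∧ (∀ b v, q (T b v) ≤ q v) ∧
      ∀ l : List ι, l ≠ [] → ∃ m : ℕ, ∀ v, q ((wordOp T l ^ m) v) ≤ 1 / 2 * q v := by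
  let e := Module.finBasis ℂ V
  let s' : Seminorm ℂ V := s + ∑ i, (normSeminorm ℂ ℂ).comp (e.coord i)
  have hs' : ∀ v, s' v = s v + ∑ i, ‖e.coord i v‖ := fun v => by
    simp [s']
  have hbdd : BddAbove (Set.range fun l => s'.comp (wordOp T l)) := by
    rw [Seminorm.bddAbove_range_iff]
    intro v
    choose C hC using fun i => hT.exists_norm_apply_le h (e.coord i) v
    refine ⟨∑ i, C i * s' (e i), ?_⟩
    rintro _ ⟨l, rfl⟩
    refine (Seminorm.le_sum_basis s' e _).trans (Finset.sum_le_sum fun i _ => ?_)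
    exact mul_le_mul_of_nonneg_right (hC i l) (apply_nonneg _ _)
  let q : Seminorm ℂ V := ⨆ l, s'.comp (wordOp T l)
  have hq : ∀ v, q v = ⨆ l, s' (wordOp T l v) := fun v => Seminorm.iSup_apply hbdd
  have hle : ∀ l v, s' (wordOp T l v) ≤ q v := fun l v => by
    rw [hq]
    exact le_ciSup (Seminorm.bddAbove_range_iff.1 hbdd v) l
  have hs'q : ∀ v, s' v ≤ q v := hle []
  refine ⟨q, fun v => ?_, fun b v => ?_, fun l hl => ?_⟩
  · refine le_trans ?_ (hs'q v)
    rw [hs']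
    exact le_add_of_nonneg_right (Finset.sum_nonneg fun i _ => norm_nonneg _)
  · rw [hq (T b v)]
    exact ciSup_le fun l => hle (b :: l) v
  · have hlim : Tendsto (fun m : ℕ => ∑ i, ∑ j, ‖e.coord i ((wordOp T l ^ m) (e j))‖ * q (e i))
        atTop (𝓝 0) := by
      rw [show (0 : ℝ) = ∑ i, ∑ _j : Fin (Module.finrank ℂ V), ‖(0 : ℂ)‖ * q (e i) by simp]
      exact tendsto_finsetSum _ fun i _ => tendsto_finsetSum _ fun j _ =>
        (tendsto_pow_apply_zero _ (hT l hl) _ _).norm.mul_const _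
    obtain ⟨m, hm⟩ := (hlim.eventually (gt_mem_nhds (by norm_num : (0 : ℝ) < 1 / 2))).exists
    refine ⟨m, fun v => ?_⟩
    refine (Seminorm.le_sum_basis q e _).trans ?_
    refine le_trans ?_ (mul_le_mul_of_nonneg_right hm.le (apply_nonneg q v))
    rw [Finset.sum_mul]
    refine Finset.sum_le_sum fun i _ => ?_
    rw [← Finset.sum_mul, mul_right_comm]
    refine mul_le_mul_of_nonneg_right ?_ (apply_nonneg _ _)
    rw [Finset.sum_mul]
    conv_lhs => rw [← e.sum_repr v]
    simp only [map_sum, map_smul]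
    refine (norm_sum_le _ _).trans (Finset.sum_le_sum fun j _ => ?_)
    rw [smul_eq_mul, norm_mul, mul_comm]
    refine mul_le_mul_of_nonneg_left (le_trans ?_ (hs'q v)) (norm_nonneg _)
    rw [hs']
    have := Finset.single_le_sum (f := fun j => ‖e.coord j v‖) (fun _ _ => norm_nonneg _)
      (Finset.mem_univ j)
    exact this.trans (le_add_of_nonneg_left (apply_nonneg s v))

theorem PeriodicallyStable.restrict (hT : PeriodicallyStable T) (W : Submodule ℂ V)
    (hW : ∀ b, ∀ w ∈ W, T b w ∈ W) : PeriodicallyStable fun b => (T b).restrict (hW b) := by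
  have key : ∀ (l : List ι) (w : W),
      (wordOp (fun b => (T b).restrict (hW b)) l w : V) = wordOp T l w := by
    intro l
    induction l with
    | nil => intro w; rfl
    | cons b l ih => intro w; exact ih _
  intro l hl z hz
  obtain ⟨w, hw⟩ := hz.exists_hasEigenvector
  refine hT l hl z (Module.End.hasEigenvalue_of_hasEigenvector (x := (w : V))
    ⟨Module.End.mem_eigenspace_iff.2 ?_, fun h0 => hw.2 (Subtype.ext h0)⟩)
  rw [← key, hw.apply_eq_smul]
  rfl

theorem PeriodicallyStable.mapQ [FiniteDimensional ℂ V] (hT : PeriodicallyStable T)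
    (W : Submodule ℂ V) (hW : ∀ b, ∀ w ∈ W, T b w ∈ W) :
    PeriodicallyStable fun b => W.mapQ W (T b) (hW b) := by
  have key : ∀ (l : List ι) (v : V),
      wordOp (fun b => W.mapQ W (T b) (hW b)) l (W.mkQ v) = W.mkQ (wordOp T l v) := by
    intro l
    induction l with
    | nil => intro v; rfl
    | cons b l ih => intro v; exact ih _
  intro l hl z hz
  by_contra hz1
  have hne : ¬ (wordOp T l).HasEigenvalue z := fun h => hz1 (hT l hl z h)
  rw [Module.End.hasEigenvalue_iff, not_not, Module.End.eigenspace_def,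
    LinearMap.ker_eq_bot_iff_range_eq_top, LinearMap.range_eq_top] at hne
  rw [Module.End.hasEigenvalue_iff, Module.End.eigenspace_def, ne_eq,
    LinearMap.ker_eq_bot_iff_range_eq_top, LinearMap.range_eq_top] at hz
  refine hz fun y => ?_
  obtain ⟨v, rfl⟩ := W.mkQ_surjective y
  obtain ⟨u, rfl⟩ := hne v
  refine ⟨W.mkQ u, ?_⟩
  simp only [LinearMap.sub_apply, key, map_sub, LinearMap.smul_apply, Module.End.one_apply, map_smul]

variable (P : Matrix ι ι ℝ≥0)

/-- The weight of the path which starts at `a` and then runs through the given letters. -/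
def pathWeight : ι → List ι → ℝ≥0
  | _, [] => 1
  | a, b :: l => P a b * pathWeight b l

variable {P}

theorem pathWeight_append (a : ι) (l l' : List ι) :
    pathWeight P a (l ++ l') = pathWeight P a l * pathWeight P (l.getLastD a) l' := by
  induction l generalizing a with
  | nil => simp [pathWeight]
  | cons b l ih =>
    rw [List.cons_append, pathWeight, ih, pathWeight, mul_assoc, List.getLastD_cons]

theorem exists_path_of_pow_pos [Fintype ι] [DecidableEq ι] (n : ℕ) (a c : ι) (h : 0 < (P ^ n) a c) :
    ∃ l : List ι, l.length = n ∧ 0 < pathWeight P a l ∧ l.getLastD a = c := by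
  induction n generalizing a with
  | zero =>
    refine ⟨[], rfl, by simp [pathWeight], ?_⟩
    by_contra hac
    simp [Matrix.one_apply_ne (show a ≠ c from hac)] at h
  | succ n ih =>
    rw [pow_succ', Matrix.mul_apply] at h
    obtain ⟨b, -, hb⟩ := Finset.exists_ne_zero_of_sum_ne_zero h.ne'
    obtain ⟨l, hl, hw, he⟩ := ih b (pos_iff_ne_zero.2 (right_ne_zero_of_mul hb))
    refine ⟨b :: l, by simp [hl], mul_pos (pos_iff_ne_zero.2 (left_ne_zero_of_mul hb)) hw, ?_⟩
    rw [List.getLastD_cons, he]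

theorem pathWeight_flatten_replicate_pos {a : ι} {l : List ι} (h : 0 < pathWeight P a l)
    (he : l.getLastD a = a) (m : ℕ) : 0 < pathWeight P a (List.replicate m l).flatten := by
  induction m with
  | zero => simp [pathWeight]
  | succ m ih =>
    rw [List.replicate_succ, List.flatten_cons, pathWeight_append, he]
    exact mul_pos h ih

end Words

/-- The family of seminorms `a ↦ ∑ b, P a b * q b (T b ·)`. -/
def transfer [Fintype ι] (P : Matrix ι ι ℝ≥0) (T : ι → End ℂ V) (q : ι → Seminorm ℂ V) (a : ι) :
    Seminorm ℂ V :=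
  ∑ b, P a b • (q b).comp (T b)

section Transfer

variable [Fintype ι] (P : Matrix ι ι ℝ≥0) (T : ι → End ℂ V)

theorem transfer_apply (q : ι → Seminorm ℂ V) (a : ι) (v : V) :
    transfer P T q a v = ∑ b, P a b * q b (T b v) := by
  simp [transfer, NNReal.smul_def]

theorem transfer_mono : Monotone (transfer P T) := by
  intro q q' h a v
  change transfer P T q a v ≤ transfer P T q' a v
  simp only [transfer_apply]
  exact Finset.sum_le_sum fun b _ => mul_le_mul_of_nonneg_left (h b _) (P a b).2

/-- The switched family `T`, driven by the weights `P`, contracts on average with respect to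
seminorms which may be taken to dominate any given one. -/
def ContractsOnAverage : Prop :=
  ∀ s : Seminorm ℂ V, ∃ r : ℝ, 0 < r ∧ r < 1 ∧ ∃ q : ι → Seminorm ℂ V,
    (∀ a, s ≤ q a) ∧ ∀ a v, transfer P T q a v ≤ r * q a v

variable {P T}

theorem transfer_const_le (hP : ∀ a, ∑ b, P a b = 1) {q : Seminorm ℂ V}
    (hq : ∀ b v, q (T b v) ≤ q v) : transfer P T (fun _ => q) ≤ fun _ => q := by
  intro a v
  change transfer P T (fun _ => q) a v ≤ q v
  rw [transfer_apply]
  calc ∑ b, (P a b : ℝ) * q (T b v) ≤ ∑ b, (P a b : ℝ) * q v :=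
        Finset.sum_le_sum fun b _ => mul_le_mul_of_nonneg_left (hq b v) (P a b).2
    _ = q v := by
        rw [← Finset.sum_mul, ← NNReal.coe_sum, hP a, NNReal.coe_one, one_mul]

theorem iterate_transfer_antitone (hP : ∀ a, ∑ b, P a b = 1) {q : Seminorm ℂ V}
    (hq : ∀ b v, q (T b v) ≤ q v) :
    Antitone fun n => (transfer P T)^[n] fun _ => q :=
  (transfer_mono P T).antitone_iterate_of_map_le (transfer_const_le hP hq)

theorem pathWeight_le_one (hP : ∀ a, ∑ b, P a b = 1) (a : ι) (l : List ι) :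
    pathWeight P a l ≤ 1 := by
  induction l generalizing a with
  | nil => exact le_rfl
  | cons b l ih =>
    refine mul_le_one' ?_ (ih b)
    rw [← hP a]
    exact Finset.single_le_sum (fun _ _ => zero_le) (Finset.mem_univ b)

theorem iterate_transfer_le (hP : ∀ a, ∑ b, P a b = 1) {q : Seminorm ℂ V}
    (hq : ∀ b v, q (T b v) ≤ q v) (l : List ι) (a : ι) (v : V) :
    (transfer P T)^[l.length] (fun _ => q) a v ≤
      q v - pathWeight P a l * (q v - q (wordOp T l v)) := by
  classical
  induction l generalizing a v with
  | nil => simp [pathWeight, wordOp]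
  | cons b l ih =>
    rw [List.length_cons, Function.iterate_succ_apply', transfer_apply]
    set F := (transfer P T)^[l.length] fun _ => q
    have hF : ∀ c w, F c w ≤ q w := fun c w =>
      iterate_transfer_antitone hP hq (Nat.zero_le l.length) c w
    have hw : (pathWeight P b l : ℝ) ≤ 1 := by exact_mod_cast pathWeight_le_one hP b l
    set δ := (pathWeight P b l : ℝ) * (q v - q (wordOp T (b :: l) v)) with hδ
    have hb : F b (T b v) ≤ q v - δ := by
      have h1 := ih b (T b v)
      have h2 := hq b v
      have h3 : wordOp T l (T b v) = wordOp T (b :: l) v := rfl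
      rw [h3] at h1
      nlinarith
    have hc : ∀ c, (P a c : ℝ) * F c (T c v) ≤
        P a c * q v - if c = b then (P a b : ℝ) * δ else 0 := by
      intro c
      split_ifs with h
      · subst h
        rw [← mul_sub]
        exact mul_le_mul_of_nonneg_left hb (P a c).2
      · rw [sub_zero]
        exact mul_le_mul_of_nonneg_left ((hF c _).trans (hq c v)) (P a c).2
    refine (Finset.sum_le_sum fun c _ => hc c).trans_eq ?_
    rw [Finset.sum_sub_distrib, ← Finset.sum_mul, ← NNReal.coe_sum, hP a]
    simp [pathWeight, hδ, mul_assoc]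

theorem contractsOnAverage_of_iterate_le (hP : ∀ a, ∑ b, P a b = 1) {s q : Seminorm ℂ V}
    (hsq : s ≤ q) (hq : ∀ b v, q (T b v) ≤ q v) {N : ℕ} (hN : 0 < N) {ε : ℝ} (hε : 0 < ε)
    (h : ∀ a v, (transfer P T)^[N] (fun _ => q) a v ≤ (1 - ε) * q v) :
    ∃ r : ℝ, 0 < r ∧ r < 1 ∧ ∃ q : ι → Seminorm ℂ V,
      (∀ a, s ≤ q a) ∧ ∀ a v, transfer P T q a v ≤ r * q a v := by
  set F : ℕ → ι → Seminorm ℂ V := fun n => (transfer P T)^[n] fun _ => q with hF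
  have hN' : (0 : ℝ) < N := by exact_mod_cast hN
  have hFq : ∀ n a v, F n a v ≤ q v := fun n a v =>
    iterate_transfer_antitone hP hq (Nat.zero_le n) a v
  refine ⟨max (1 - ε / N) (1 / 2), by positivity, max_lt (by simp; positivity) (by norm_num),
    fun a => ∑ j ∈ Finset.range N, F j a, fun a v => ?_, fun a v => ?_⟩
  · change s v ≤ (∑ j ∈ Finset.range N, F j a) v
    rw [_root_.sum_apply]
    exact (hsq v).trans (Finset.single_le_sum (f := fun j => F j a v)
      (fun _ _ => apply_nonneg _ _) (Finset.mem_range.2 hN))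
  · have h1 : transfer P T (fun a => ∑ j ∈ Finset.range N, F j a) a v =
        ∑ j ∈ Finset.range N, F (j + 1) a v := by
      simp only [transfer_apply, _root_.sum_apply, Finset.mul_sum]
      rw [Finset.sum_comm]
      refine Finset.sum_congr rfl fun j _ => ?_
      simp only [hF]
      rw [Function.iterate_succ_apply', transfer_apply]
    have h2 := Finset.sum_range_succ' (fun j => F j a v) N
    rw [Finset.sum_range_succ] at h2
    have h3 : F 0 a v = q v := rfl
    have h4 : ∑ j ∈ Finset.range N, F j a v ≤ N * q v := by
      simpa using Finset.sum_le_sum fun j (_ : j ∈ Finset.range N) => hFq j a v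
    rw [_root_.sum_apply, h1]
    have h5 := h a v
    have h6 : ε / N * ∑ j ∈ Finset.range N, F j a v ≤ ε * q v := by
      calc _ ≤ ε / N * (N * q v) := mul_le_mul_of_nonneg_left h4 (by positivity)
        _ = ε * q v := by field_simp
    have h7 : 0 ≤ ∑ j ∈ Finset.range N, F j a v := Finset.sum_nonneg fun _ _ => apply_nonneg _ _
    refine le_trans ?_ (mul_le_mul_of_nonneg_right (le_max_left _ _) h7)
    change (F N a) v ≤ _ at h5
    linarith

theorem PeriodicallyStable.contractsOnAverage_of_irreducible [DecidableEq ι]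
    [FiniteDimensional ℂ V] [Nontrivial V] (hT : PeriodicallyStable T)
    (h : ∀ W : Submodule ℂ V, (∀ b, ∀ w ∈ W, T b w ∈ W) → W = ⊥ ∨ W = ⊤)
    (hP : ∀ a, ∑ b, P a b = 1) (hloop : ∀ a, ∃ n : ℕ, 1 ≤ n ∧ 0 < (P ^ n) a a) :
    ContractsOnAverage P T := by
  intro s
  obtain ⟨q, hsq, hq, hm⟩ := hT.exists_seminorm h s
  have key : ∀ a, ∃ n : ℕ, ∃ ε : ℝ, 0 < ε ∧
      ∀ v, (transfer P T)^[n] (fun _ => q) a v ≤ (1 - ε) * q v := by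
    intro a
    obtain ⟨n, hn, hpos⟩ := hloop a
    obtain ⟨l, hl, hw, he⟩ := exists_path_of_pow_pos n a a hpos
    obtain ⟨m, hm⟩ := hm l (by rintro rfl; simp at hl; omega)
    have hw' := pathWeight_flatten_replicate_pos hw he m
    set L := (List.replicate m l).flatten with hL
    refine ⟨L.length, pathWeight P a L / 2, by positivity, fun v => ?_⟩
    refine (iterate_transfer_le hP hq L a v).trans ?_
    have h1 := hm v
    rw [← wordOp_flatten_replicate, ← hL] at h1
    have h2 : (0 : ℝ) < pathWeight P a L := hw'
    nlinarith
  choose n ε hε hn using key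
  cases isEmpty_or_nonempty ι with
  | inl hι => exact ⟨1 / 2, by norm_num, by norm_num, fun _ => q, fun _ => hsq, fun a => isEmptyElim a⟩
  | inr hι =>
    obtain ⟨a₀, ha₀⟩ := Finite.exists_min ε
    refine contractsOnAverage_of_iterate_le hP hsq hq (N := (∑ a, n a) + 1) (Nat.succ_pos _)
      (hε a₀) fun a v => ?_
    have h1 : n a ≤ (∑ a, n a) + 1 :=
      (Finset.single_le_sum (fun _ _ => Nat.zero_le _) (Finset.mem_univ a)).trans (Nat.le_succ _)
    refine (iterate_transfer_antitone hP hq h1 a v).trans ((hn a v).trans ?_)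
    exact mul_le_mul_of_nonneg_right (by linarith [ha₀ a]) (apply_nonneg q v)


/-- Contraction on average passes from an invariant subspace and its quotient to the whole space. -/
theorem ContractsOnAverage.of_invariant (hP : ∀ a, ∑ b, P a b = 1) (W : Submodule ℂ V)
    (hW : ∀ b, ∀ w ∈ W, T b w ∈ W)
    (h₁ : ContractsOnAverage P fun b => (T b).restrict (hW b))
    (h₂ : ContractsOnAverage P fun b => W.mapQ W (T b) (hW b)) : ContractsOnAverage P T := by
  intro s
  obtain ⟨π, hπ⟩ := W.subtype.exists_leftInverse_of_injective W.ker_subtype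
  replace hπ : ∀ w : W, π w = w := fun w => LinearMap.congr_fun hπ w
  let σ : V ⧸ W →ₗ[ℂ] V := W.liftQ (LinearMap.id - W.subtype ∘ₗ π) fun w hw => by
    simp [hπ ⟨w, hw⟩]
  let R : ι → V ⧸ W →ₗ[ℂ] W := fun b =>
    W.liftQ (π ∘ₗ T b - (T b).restrict (hW b) ∘ₗ π) fun w hw => by
      have h1 := hπ ⟨w, hw⟩
      have h2 := hπ ⟨T b w, hW b w hw⟩
      simp only [LinearMap.mem_ker, LinearMap.sub_apply, LinearMap.comp_apply]
      simp only at h1 h2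
      rw [h1, h2, sub_eq_zero]
      rfl
  obtain ⟨r₁, hr₁0, hr₁, q₁, hsq₁, hq₁⟩ := h₁ (s.comp W.subtype)
  obtain ⟨r₂, hr₂0, hr₂, q₂, hsq₂, hq₂⟩ := h₂ (s.comp σ + ∑ b, (q₁ b).comp (R b))
  have hsq₂' : ∀ a x, s (σ x) + ∑ b, q₁ b (R b x) ≤ q₂ a x := fun a x => by
    simpa using hsq₂ a x
  set r := max r₁ r₂ with hr
  have hr0 : 0 < r := lt_max_of_lt_left hr₁0
  have hr1 : r < 1 := max_lt hr₁ hr₂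
  let M : ℝ≥0 := ⟨2 / (1 - r), by have := sub_pos.2 hr1; positivity⟩
  have hM : (M : ℝ) * (1 - r) = 2 := div_mul_cancel₀ _ (sub_pos.2 hr1).ne'
  have hM1 : (1 : ℝ) ≤ M := by nlinarith [M.2]
  have hqv : ∀ a v, (M • (q₂ a).comp W.mkQ + (q₁ a).comp π) v = M * q₂ a (W.mkQ v) + q₁ a (π v) :=
    fun a v => by simp [NNReal.smul_def]
  refine ⟨(1 + r) / 2, by linarith, by linarith,
    fun a => M • (q₂ a).comp W.mkQ + (q₁ a).comp π, fun a v => ?_, fun a v => ?_⟩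
  · change s v ≤ (M • (q₂ a).comp W.mkQ + (q₁ a).comp π) v
    rw [hqv]
    have hv : v = σ (W.mkQ v) + π v := by simp [σ]
    have h1 : s v ≤ s (σ (W.mkQ v)) + s (π v) := by
      conv_lhs => rw [hv]
      exact map_add_le_add s _ _
    have h2 : s (π v) ≤ q₁ a (π v) := hsq₁ a (π v)
    have h3 := hsq₂' a (W.mkQ v)
    have h4 : 0 ≤ ∑ b, q₁ b (R b (W.mkQ v)) := Finset.sum_nonneg fun _ _ => apply_nonneg _ _
    have h5 : 0 ≤ q₂ a (W.mkQ v) := apply_nonneg _ _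
    nlinarith
  · rw [transfer_apply, hqv]
    simp only [hqv]
    have hb : ∀ b, q₁ b (π (T b v)) ≤
        q₁ b ((T b).restrict (hW b) (π v)) + q₁ b (R b (W.mkQ v)) := fun b => by
      have : π (T b v) = (T b).restrict (hW b) (π v) + R b (W.mkQ v) := by simp [R]
      rw [this]
      exact map_add_le_add _ _ _
    have h1 := hq₁ a (π v)
    have h2 := hq₂ a (W.mkQ v)
    rw [transfer_apply] at h1 h2
    have h3 : ∑ b, (P a b : ℝ) * q₁ b (R b (W.mkQ v)) ≤ q₂ a (W.mkQ v) := by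
      have h4 := hsq₂' a (W.mkQ v)
      have h5 : 0 ≤ s (σ (W.mkQ v)) := apply_nonneg _ _
      refine le_trans (Finset.sum_le_sum fun b _ => ?_) (by linarith)
      have : P a b ≤ 1 := hP a ▸ Finset.single_le_sum (fun _ _ => zero_le) (Finset.mem_univ b)
      exact mul_le_of_le_one_left (apply_nonneg _ _) (by exact_mod_cast this)
    have h6 : ∑ b, (P a b : ℝ) * (M * q₂ b (W.mkQ (T b v)) + q₁ b (π (T b v))) ≤
        M * (∑ b, (P a b : ℝ) * q₂ b (W.mapQ W (T b) (hW b) (W.mkQ v))) +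
        (∑ b, (P a b : ℝ) * q₁ b ((T b).restrict (hW b) (π v)) +
          ∑ b, (P a b : ℝ) * q₁ b (R b (W.mkQ v))) := by
      rw [Finset.mul_sum, ← Finset.sum_add_distrib, ← Finset.sum_add_distrib]
      refine Finset.sum_le_sum fun b _ => ?_
      have := mul_le_mul_of_nonneg_left (hb b) (P a b).2
      simp only [Submodule.mkQ_apply, Submodule.mapQ_apply] at this ⊢
      change (P a b : ℝ) * _ ≤ (P a b : ℝ) * _ at this
      linarith
    refine h6.trans ?_
    have h7 : 0 ≤ q₂ a (W.mkQ v) := apply_nonneg _ _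
    have h8 : 0 ≤ q₁ a (π v) := apply_nonneg _ _
    have h9 : r₁ * q₁ a (π v) ≤ r * q₁ a (π v) :=
      mul_le_mul_of_nonneg_right (le_max_left _ _) h8
    have h10 : r₂ * q₂ a (W.mkQ v) ≤ r * q₂ a (W.mkQ v) :=
      mul_le_mul_of_nonneg_right (le_max_right _ _) h7
    have h11 := mul_le_mul_of_nonneg_left (h2.trans h10) M.2
    have h12 : (M : ℝ) * ((1 + r) / 2) = M * r + 1 := by linarith
    have h13 : r * q₁ a (π v) ≤ (1 + r) / 2 * q₁ a (π v) :=
      mul_le_mul_of_nonneg_right (by linarith) h8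
    have h14 : (1 + r) / 2 * ((M : ℝ) * q₂ a (W.mkQ v)) =
        M * (r * q₂ a (W.mkQ v)) + q₂ a (W.mkQ v) := by
      linear_combination q₂ a (W.mkQ v) * h12
    change (M : ℝ) * _ ≤ (M : ℝ) * _ at h11
    linarith

/-- A periodically stable family driven by an irreducible Markov chain contracts on average. -/
theorem PeriodicallyStable.contractsOnAverage {ι : Type*} [Fintype ι] [DecidableEq ι]
    {P : Matrix ι ι ℝ≥0} (hP : ∀ a, ∑ b, P a b = 1)
    (hloop : ∀ a, ∃ n : ℕ, 1 ≤ n ∧ 0 < (P ^ n) a a) {V : Type*} [AddCommGroup V] [Module ℂ V]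
    [FiniteDimensional ℂ V] {T : ι → End ℂ V} (hT : PeriodicallyStable T) :
    ContractsOnAverage P T := by
  induction hn : Module.finrank ℂ V using Nat.strong_induction_on generalizing V with
  | _ n ih =>
    subst hn
    cases subsingleton_or_nontrivial V with
    | inl hV =>
      refine fun s => ⟨1 / 2, by norm_num, by norm_num, fun _ => s, fun _ => le_rfl, fun a v => ?_⟩
      rw [Subsingleton.elim v 0, map_zero, map_zero, mul_zero]
    | inr hV =>
      by_cases hirr : ∀ W : Submodule ℂ V, (∀ b, ∀ w ∈ W, T b w ∈ W) → W = ⊥ ∨ W = ⊤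
      · exact hT.contractsOnAverage_of_irreducible hirr hP hloop
      · push Not at hirr
        obtain ⟨W, hW, hbot, htop⟩ := hirr
        have h1 : Module.finrank ℂ W < Module.finrank ℂ V := Submodule.finrank_lt htop
        have h2 : Module.finrank ℂ (V ⧸ W) < Module.finrank ℂ V := by
          have := W.finrank_quotient_add_finrank
          have := Submodule.one_le_finrank_iff.2 hbot
          omega
        exact .of_invariant hP W hW (ih _ h1 (hT.restrict W hW) rfl) (ih _ h2 (hT.mapQ W hW) rfl)

end Transfer

end MarkovSwitching

theorem pathWeight_ofFn {ι : Type*} (P : Matrix ι ι ℝ≥0) (n : ℕ) (w : Fin (n + 1) → ι) :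
    pathWeight P (w 0) (List.ofFn fun t : Fin n => w t.succ) =
      ∏ t : Fin n, P (w t.castSucc) (w t.succ) := by
  induction n with
  | zero => simp [pathWeight]
  | succ n ih =>
    rw [List.ofFn_succ, pathWeight, Fin.prod_univ_succ]
    congr 1
    exact ih fun t => w t.succ

theorem sum_pathWeight_mul_le {ι V : Type*} [Fintype ι] [AddCommGroup V] [Module ℂ V]
    {P : Matrix ι ι ℝ≥0} {T : ι → End ℂ V} {s : Seminorm ℂ V} {r : ℝ} (hr : 0 ≤ r)
    {q : ι → Seminorm ℂ V} (hs : ∀ a, s ≤ q a) (hq : ∀ a v, transfer P T q a v ≤ r * q a v)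
    (n : ℕ) (a : ι) (v : V) :
    ∑ w : Fin n → ι, (pathWeight P a (List.ofFn w) : ℝ) * s (wordOp T (List.ofFn w) v) ≤
      r ^ n * q a v := by
  induction n generalizing a v with
  | zero => simpa [pathWeight, wordOp] using hs a v
  | succ n ih =>
    rw [← (Fin.consEquiv fun _ => ι).sum_comp, Fintype.sum_prod_type]
    calc _ = ∑ b, (P a b : ℝ) * ∑ w : Fin n → ι,
          (pathWeight P b (List.ofFn w) : ℝ) * s (wordOp T (List.ofFn w) (T b v)) := by
          refine Finset.sum_congr rfl fun b _ => ?_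
          rw [Finset.mul_sum]
          refine Finset.sum_congr rfl fun w _ => ?_
          simp [Fin.consEquiv, List.ofFn_succ, pathWeight, wordOp, mul_assoc]
      _ ≤ ∑ b, (P a b : ℝ) * (r ^ n * q b (T b v)) :=
          Finset.sum_le_sum fun b _ => mul_le_mul_of_nonneg_left (ih b _) (P a b).2
      _ = r ^ n * transfer P T q a v := by
          rw [transfer_apply, Finset.mul_sum]
          exact Finset.sum_congr rfl fun b _ => by ring
      _ ≤ r ^ n * (r * q a v) := mul_le_mul_of_nonneg_left (hq a v) (pow_nonneg hr n)
      _ = r ^ (n + 1) * q a v := by ring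

section MatrixWords

variable {d K : ℕ} (S : Fin K → Matrix (Fin d) (Fin d) ℂ)

theorem wordOp_mulRight_apply (l : List (Fin K)) (X : Matrix (Fin d) (Fin d) ℂ) :
    wordOp (fun k => LinearMap.mulRight ℂ (S k)) l X = X * (l.map S).prod := by
  induction l generalizing X with
  | nil => simp [wordOp]
  | cons b l ih => simp [wordOp, ih, mul_assoc]

section

attribute [local instance] Matrix.linftyOpNormedRing Matrix.linftyOpNormedAlgebra

theorem norm_le_specRad {A : Matrix (Fin d) (Fin d) ℂ} {z : ℂ} (hz : z ∈ spectrum ℂ A) :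
    ‖z‖ ≤ specRad A := by
  obtain ⟨k, -, hk⟩ := spectrum.exists_nnnorm_eq_spectralRadius_of_nonempty ⟨z, hz⟩
  have h : (‖z‖₊ : ℝ≥0∞) ≤ spectralRadius ℂ A := le_iSup₂ (α := ℝ≥0∞) z hz
  rw [specRad, ← hk]
  rw [← hk] at h
  exact_mod_cast h

end

variable {S}

theorem periodicallyStable_mulRight
    (hstab : ∀ (n : ℕ), 1 ≤ n → ∀ w : Fin n → Fin K, specRad (finWordProd S w) < 1) :
    PeriodicallyStable fun k => LinearMap.mulRight ℂ (S k) := by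
  intro l hl z hz
  have hA : (l.map S).prod = finWordProd S l.get := by
    conv_lhs => rw [← List.ofFn_get l, List.map_ofFn]
    rfl
  obtain ⟨X, hX⟩ := hz.exists_hasEigenvector
  have hXA := hX.apply_eq_smul
  rw [wordOp_mulRight_apply, hA] at hXA
  refine lt_of_le_of_lt (norm_le_specRad ?_) (hstab l.length (List.length_pos_iff.2 hl) l.get)
  intro hu
  refine hX.2 ((hu.mul_left_eq_zero).1 ?_)
  rw [mul_sub, hXA, Algebra.algebraMap_eq_smul_one, mul_smul_comm, mul_one, sub_self]

/-- A matrix norm as a seminorm. -/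
def MatrixNorm.toSeminorm (ν : MatrixNorm d) : Seminorm ℂ (Matrix (Fin d) (Fin d) ℂ) :=
  Seminorm.of ν.N ν.triangle ν.homog

/-- The expected norm of the product along the first `n + 1` letters decays exponentially. -/
theorem exists_sum_weight_mul_norm_le (ν : MatrixNorm d)
    (hstab : ∀ (n : ℕ), 1 ≤ n → ∀ w : Fin n → Fin K, specRad (finWordProd S w) < 1)
    {Pm : Matrix (Fin K) (Fin K) ℝ} (hPnn : ∀ a b, 0 ≤ Pm a b) (hProw : ∀ a, ∑ b, Pm a b = 1)
    (hloop : ∀ a, ∃ n : ℕ, 1 ≤ n ∧ 0 < (Pm ^ n) a a)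
    {p : Fin K → ℝ} (hp : ∀ k, 0 ≤ p k) :
    ∃ r C : ℝ, 0 < r ∧ r < 1 ∧ ∀ n : ℕ, ∑ w : Fin (n + 1) → Fin K,
      p (w 0) * (∏ t : Fin n, Pm (w t.castSucc) (w t.succ)) * ν.N (finWordProd S w) ≤
        C * r ^ n := by
  let P : Matrix (Fin K) (Fin K) ℝ≥0 := fun a b => ⟨Pm a b, hPnn a b⟩
  have hPm : P.map NNReal.toRealHom = Pm := rfl
  have hP : ∀ a, ∑ b, P a b = 1 := fun a =>
    NNReal.eq ((NNReal.coe_sum Finset.univ (P a)).trans (hProw a))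
  have hl : ∀ a, ∃ n : ℕ, 1 ≤ n ∧ 0 < (P ^ n) a a := by
    intro a
    obtain ⟨n, hn, h⟩ := hloop a
    refine ⟨n, hn, ?_⟩
    rw [← hPm, ← Matrix.map_pow] at h
    exact h
  obtain ⟨r, hr0, hr1, q, hs, hq⟩ :=
    (periodicallyStable_mulRight hstab).contractsOnAverage hP hl ν.toSeminorm
  refine ⟨r, ∑ a, p a * q a (S a), hr0, hr1, fun n => ?_⟩
  rw [← (Fin.consEquiv fun _ => Fin K).sum_comp, Fintype.sum_prod_type, Finset.sum_mul]
  refine Finset.sum_le_sum fun a _ => ?_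
  have h := mul_le_mul_of_nonneg_left (sum_pathWeight_mul_le hr0.le hs hq n a (S a)) (hp a)
  refine le_trans (le_of_eq ?_) (h.trans_eq (by ring))
  rw [Finset.mul_sum]
  refine Finset.sum_congr rfl fun w _ => ?_
  have h1 := pathWeight_ofFn P n (Fin.cons a w)
  simp only [Fin.cons_zero, Fin.cons_succ] at h1
  rw [h1, wordOp_mulRight_apply, NNReal.coe_prod]
  simp only [Fin.consEquiv, Equiv.coe_fn_mk, Fin.cons_zero, Fin.cons_succ, mul_assoc]
  congr 2
  rw [finWordProd, List.ofFn_succ, List.prod_cons, List.map_ofFn]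
  rfl

theorem measure_lt_norm_wordProd_le (ν : MatrixNorm d) (μ : Measure (ℕ → Fin K)) (n : ℕ)
    {f : (Fin n → Fin K) → ℝ} (hf : ∀ w, 0 ≤ f w) (hμ : ∀ w, μ (cyl w) = ENNReal.ofReal (f w))
    {x : ℝ} (hx : 0 < x) :
    μ {i | x < ν.N (wordProd S i n)} ≤
      ENNReal.ofReal ((∑ w, f w * ν.N (finWordProd S w)) / x) := by
  classical
  set G := Finset.univ.filter fun w : Fin n → Fin K => x < ν.N (finWordProd S w)
  have hsub : {i | x < ν.N (wordProd S i n)} ⊆ ⋃ w ∈ G, cyl w := by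
    intro i hi
    simp only [Set.mem_iUnion]
    exact ⟨fun t => i t, Finset.mem_filter.2 ⟨Finset.mem_univ _, hi⟩, fun _ => rfl⟩
  refine (measure_mono hsub).trans ((measure_biUnion_finset_le _ _).trans ?_)
  simp only [hμ]
  rw [← ENNReal.ofReal_sum_of_nonneg fun w _ => hf w]
  refine ENNReal.ofReal_le_ofReal ?_
  rw [le_div_iff₀ hx, Finset.sum_mul]
  calc _ ≤ ∑ w ∈ G, f w * ν.N (finWordProd S w) := Finset.sum_le_sum fun w hw =>
        mul_le_mul_of_nonneg_left (Finset.mem_filter.1 hw).2.le (hf w)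
    _ ≤ _ := Finset.sum_le_sum_of_subset_of_nonneg (Finset.subset_univ _)
        fun w _ _ => mul_nonneg (hf w) (ν.nonneg _)

end MatrixWords

/-- If `S` is periodically switched stable and the canonical `(p, P)`-Markov measure of an
irreducible stochastic matrix `P` with positive stationary distribution `p` is extremal
for `S`, then `ρ(S) < 1`. -/
theorem spectral_radius_lt_one_of_periodically_stable_and_extremal_markov
    {d K : ℕ} (hd : 2 ≤ d) (hK : 2 ≤ K)
    (S : Fin K → Matrix (Fin d) (Fin d) ℂ) (ν : MatrixNorm d)
    (hstab : ∀ (n : ℕ), 1 ≤ n → ∀ w : Fin n → Fin K, specRad (finWordProd S w) < 1)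
    (Pm : Matrix (Fin K) (Fin K) ℝ)
    (hPnn : ∀ a b, 0 ≤ Pm a b)
    (hProw : ∀ a, ∑ b, Pm a b = 1)
    (hPirr : ∀ a b, ∃ n : ℕ, 1 ≤ n ∧ 0 < (Pm ^ n) a b)
    (p : Fin K → ℝ) (hppos : ∀ k, 0 < p k) (hpsum : ∑ k, p k = 1)
    (hstat : ∀ b, ∑ a, p a * Pm a b = p b)
    (μ : Measure (ℕ → Fin K)) [IsProbabilityMeasure μ]
    (hcyl : ∀ (n : ℕ) (w : Fin (n + 1) → Fin K),
      μ (cyl w) = ENNReal.ofReal (p (w 0) * ∏ t : Fin n, Pm (w t.castSucc) (w t.succ)))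
    (hext : IsExtremal S ν.N μ) :
    genSpecRad S < 1 := by
  by_contra! hge
  obtain ⟨r, C, hr0, hr1, hC⟩ :=
    exists_sum_weight_mul_norm_le ν hstab hPnn hProw (fun a => hPirr a a) fun k => (hppos k).le
  obtain ⟨x, hrx, hx1⟩ := exists_between hr1
  have hx0 : 0 < x := hr0.trans hrx
  have hsum : Summable fun n : ℕ => C / x * (r / x) ^ n :=
    (summable_geometric_of_lt_one (by positivity) ((div_lt_one hx0).2 hrx)).mul_left _
  have hμ : ∀ n : ℕ, μ {i | x ^ (n + 1) < ν.N (wordProd S i (n + 1))} ≤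
      ENNReal.ofReal (C / x * (r / x) ^ n) := fun n => by
    refine (measure_lt_norm_wordProd_le ν μ (n + 1)
      (fun w => mul_nonneg (hppos _).le (Finset.prod_nonneg fun t _ => hPnn _ _))
      (hcyl n) (by positivity)).trans (ENNReal.ofReal_le_ofReal ?_)
    refine (div_le_div_of_nonneg_right (hC n) (by positivity)).trans_eq ?_
    rw [div_pow, pow_succ]
    field_simp
  have hae := ae_eventually_notMem
    (ne_top_of_le_ne_top hsum.tsum_ofReal_ne_top (ENNReal.tsum_le_tsum hμ))
  obtain ⟨i, hi, hlim⟩ := (hae.and hext).exists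
  have hev := (tendsto_add_atTop_iff_nat 1).2 hlim |>.eventually
    (lt_mem_nhds (hx1.trans_le hge))
  obtain ⟨n, hn, hn'⟩ := (hi.and hev).exists
  refine hn ?_
  have h := pow_lt_pow_left₀ hn' hx0.le n.succ_ne_zero
  rwa [Nat.succ_eq_add_one, Real.rpow_inv_natCast_pow (ν.nonneg _) n.succ_ne_zero] at h
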